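/- For s ∈ {0,1,…,n−2} and 1 ≤ g ≤ min{s+1, ⌊(n−s)/2⌋}, the pair sum satisfies c_{s,g} = C(s+1, g) · (n! / (2n−s)!) · Σ_{x ∈ 𝒞(n−s, g; 2)} ∏_{i=1}^{g} w_{x_i} · C(2x_i, x_i), where 𝒞(N, j; 2) is the set of compositions (x_1,…,x_j) of N into j nonnegative integer parts each at least 2, and w_m is the number of direct paths from ∅ to [m] in the m-dimensional hypercube that are edge-disjoint from the canonical path π_m (with w_0 = 1). -/

import Mathlib

open MeasureTheory Filter

namespace RandomHypercube

/-- Index of a (potential) hypercube edge: the lower endpoint `A` together with the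
direction `i` that is added, representing the edge from `A` to `A ∪ {i}`. -/
abbrev EdgeIdx (n : ℕ) := Finset (Fin n) × Fin n

/-- The sample space: an i.i.d. Uniform[0,1] weight for each edge index. -/
abbrev CubeOmega (n : ℕ) := EdgeIdx n → ℝ

/-- The product of uniform measures on [0,1], one for each edge. -/
noncomputable def cubeMeasure (n : ℕ) : Measure (CubeOmega n) :=
  Measure.pi fun _ => (volume : Measure ℝ).restrict (Set.Icc 0 1)

/-- The vertex visited by the direct path associated to the permutation `σ`
just before taking its `j`-th step: the image under `σ` of `{0, …, j-1}`. -/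
def initSeg (n : ℕ) (σ : Equiv.Perm (Fin n)) (j : Fin n) : Finset (Fin n) :=
  (Finset.univ.filter fun i => i < j).image σ

/-- The edge used in the `j`-th step of the direct path associated to `σ`. -/
def pathEdge (n : ℕ) (σ : Equiv.Perm (Fin n)) (j : Fin n) : EdgeIdx n :=
  (initSeg n σ j, σ j)

/-- The direct path associated to `σ` is accessible if its successive edge
weights are strictly increasing. -/
def Accessible (n : ℕ) (σ : Equiv.Perm (Fin n)) (ω : CubeOmega n) : Prop :=
  StrictMono fun j : Fin n => ω (pathEdge n σ j)

/-- The number of accessible direct paths from `∅` to `[n]`. -/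
noncomputable def X (n : ℕ) (ω : CubeOmega n) : ℕ :=
  Nat.card {σ : Equiv.Perm (Fin n) // Accessible n σ ω}


/-- The set of steps `j` at which the direct paths of `σ` and `σ'` use the same edge
(shared edges necessarily occur at the same level in both paths). -/
def sharedSteps (n : ℕ) (σ σ' : Equiv.Perm (Fin n)) : Finset (Fin n) :=
  Finset.univ.filter fun j => pathEdge n σ j = pathEdge n σ' j

/-- Given the sorted list `l` of steps (levels) of the shared edges, the gap vector:
the number of edges before the first shared edge, strictly between consecutive shared
edges, and after the last shared edge. -/
def gapsOfList (n : ℕ) (l : List ℕ) : List ℕ :=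
  List.zipWith (fun a b => b - a) (0 :: l.map (· + 1)) (l ++ [n])

/-- The gap vector of the direct path of `σ'` relative to that of `σ`. -/
def gapVector (n : ℕ) (σ σ' : Equiv.Perm (Fin n)) : List ℕ :=
  gapsOfList n (((sharedSteps n σ σ').sort (· ≤ ·)).map Fin.val)

/-- The number of (nontrivial) gaps between the direct paths of `σ` and `σ'`:
the number of nonzero entries of the gap vector. -/
def numGaps (n : ℕ) (σ σ' : Equiv.Perm (Fin n)) : ℕ :=
  ((gapVector n σ σ').filter (· != 0)).length

/-- The probability that the direct paths of `σ` and `σ'` are both accessible. -/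
noncomputable def pairProb (n : ℕ) (σ σ' : Equiv.Perm (Fin n)) : ℝ :=
  (cubeMeasure n {ω | Accessible n σ ω ∧ Accessible n σ' ω}).toReal

/-- `c n s g`: the sum, over all ordered pairs of direct paths sharing exactly `s`
edges with `g` gaps, of the probability that both paths are accessible. -/
noncomputable def c (n s g : ℕ) : ℝ :=
  ∑ p ∈ Finset.univ.filter
      (fun p : Equiv.Perm (Fin n) × Equiv.Perm (Fin n) =>
        (sharedSteps n p.1 p.2).card = s ∧ numGaps n p.1 p.2 = g),
    pairProb n p.1 p.2

/-- `w m`: the number of direct paths from `∅` to `[m]` in the `m`-dimensional hypercube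
that are edge-disjoint from the canonical path (the identity permutation). -/
noncomputable def w (m : ℕ) : ℕ :=
  Nat.card {σ : Equiv.Perm (Fin m) // sharedSteps m σ 1 = ∅}

end RandomHypercube

namespace RandomHypercube

open ProbabilityTheory


noncomputable def lam : Measure ℝ := (volume : Measure ℝ).restrict (Set.Icc 0 1)

instance lam_prob : IsProbabilityMeasure lam := by
  constructor
  simp [lam]

theorem mp_precomp {ι κ : Type*} [Fintype ι] [Fintype κ] (e : κ → ι) (he : Function.Injective e) :
    MeasurePreserving (fun (ω : ι → ℝ) (j : κ) => ω (e j))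
      (Measure.pi fun _ : ι => lam) (Measure.pi fun _ : κ => lam) := by
  refine ⟨by fun_prop, ?_⟩
  have h1 : iIndepFun (fun (i : ι) (ω : ι → ℝ) => ω i) (Measure.pi fun _ : ι => lam) :=
    iIndepFun_pi (μ := fun _ : ι => lam) (X := fun _ => id) (fun _ => aemeasurable_id)
  have h2 := h1.precomp he
  rw [iIndepFun_iff_map_fun_eq_pi_map (fun i => (measurable_pi_apply (e i)).aemeasurable)] at h2
  rw [h2]
  congr 1
  funext j
  exact (measurePreserving_eval (fun _ : ι => lam) (e j)).map_eq

theorem mp_append (a b : ℕ) :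
    MeasurePreserving (fun p : (Fin a → ℝ) × (Fin b → ℝ) => Fin.append p.1 p.2)
      ((Measure.pi fun _ : Fin a => lam).prod (Measure.pi fun _ : Fin b => lam))
      (Measure.pi fun _ : Fin (a + b) => lam) := by
  have h1 := measurePreserving_sumPiEquivProdPi_symm (fun _ : Fin a ⊕ Fin b => lam)
  have h2 := mp_precomp (finSumFinEquiv (m := a) (n := b)).symm (Equiv.injective _)
  have h3 := h2.comp h1
  convert h3 using 1
  funext p j
  refine Fin.addCases (fun i => ?_) (fun i => ?_) j
  · simp [MeasurableEquiv.sumPiEquivProdPi]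
  · simp [MeasurableEquiv.sumPiEquivProdPi]

theorem mp_cons (b : ℕ) :
    MeasurePreserving (fun p : ℝ × (Fin b → ℝ) => (Fin.cons p.1 p.2 : Fin (b+1) → ℝ))
      (lam.prod (Measure.pi fun _ : Fin b => lam))
      (Measure.pi fun _ : Fin (b + 1) => lam) := by
  have h := (measurePreserving_piFinSuccAbove (fun _ : Fin (b+1) => lam) 0).symm
  convert h using 1
  funext p j
  refine Fin.cases ?_ (fun j => ?_) j <;> simp [MeasurableEquiv.piFinSuccAbove]

def Inc (n : ℕ) (t y : ℝ) : Set (Fin n → ℝ) :=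
  {a | StrictMono a ∧ ∀ j, t < a j ∧ a j < y}

theorem measurableSet_strictMono {Ω : Type*} [MeasurableSpace Ω] (n : ℕ) (f : Ω → Fin n → ℝ)
    (hf : Measurable f) : MeasurableSet {ω | StrictMono (f ω)} := by
  have : {ω | StrictMono (f ω)} = ⋂ i, ⋂ j, {ω | i < j → f ω i < f ω j} := by
    ext ω; simp [StrictMono]
  rw [this]
  refine MeasurableSet.iInter fun i => MeasurableSet.iInter fun j => ?_
  by_cases h : i < j
  · simp only [h, true_imp_iff]
    exact measurableSet_lt (by fun_prop) (by fun_prop)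
  · simp [h]

theorem Inc_meas {Ω : Type*} [MeasurableSpace Ω] (n : ℕ) (f : Ω → Fin n → ℝ) (t y : Ω → ℝ)
    (hf : Measurable f) (ht : Measurable t) (hy : Measurable y) :
    MeasurableSet {ω | f ω ∈ Inc n (t ω) (y ω)} := by
  have : {ω | f ω ∈ Inc n (t ω) (y ω)} = {ω | StrictMono (f ω)} ∩
      ⋂ j, ({ω | t ω < f ω j} ∩ {ω | f ω j < y ω}) := by
    ext ω; simp [Inc]
  rw [this]
  refine (measurableSet_strictMono n f hf).inter (MeasurableSet.iInter fun j => ?_)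
  exact (measurableSet_lt ht (by fun_prop)).inter (measurableSet_lt (by fun_prop) hy)

theorem Inc_append_cons (x m : ℕ) (t z y : ℝ) (a : Fin x → ℝ) (u : Fin m → ℝ) :
    (Fin.append a (Fin.cons y u : Fin (m+1) → ℝ)) ∈ Inc (x + (m+1)) t z ↔
      a ∈ Inc x t y ∧ (t < y ∧ y < z) ∧ u ∈ Inc m y z := by
  constructor
  · rintro ⟨h1, h2⟩
    have hy := h2 (Fin.natAdd x 0)
    simp only [Fin.append_right, Fin.cons_zero] at hy
    refine ⟨⟨?_, ?_⟩, hy, ⟨?_, ?_⟩⟩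
    · intro i j hij
      have := h1 (show Fin.castAdd (m+1) i < Fin.castAdd (m+1) j from hij)
      simpa using this
    · intro j
      have h3 := h1 (show Fin.castAdd (m+1) j < Fin.natAdd x 0 from by
        rw [Fin.lt_def]; simp)
      have h4 := h2 (Fin.castAdd (m+1) j)
      simp only [Fin.append_right, Fin.append_left, Fin.cons_zero] at h3 h4
      exact ⟨h4.1, h3⟩
    · intro i j hij
      have := h1 (show Fin.natAdd x i.succ < Fin.natAdd x j.succ from by
        rw [Fin.lt_def]; simpa using hij)
      simpa using this
    · intro j
      have h3 := h1 (show Fin.natAdd x 0 < Fin.natAdd x j.succ from by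
        rw [Fin.lt_def]; simp)
      have h4 := h2 (Fin.natAdd x j.succ)
      simp only [Fin.append_right, Fin.cons_zero, Fin.cons_succ] at h3 h4
      exact ⟨h3, h4.2⟩
  · rintro ⟨⟨h1, h2⟩, hy, ⟨h3, h4⟩⟩
    constructor
    · intro i j
      refine Fin.addCases (fun i => ?_) (fun i => ?_) i <;>
      refine Fin.addCases (fun j => ?_) (fun j => ?_) j
      · intro h
        simpa using h1 (show i < j from h)
      · intro h
        refine Fin.cases ?_ (fun j => ?_) j
        · simpa using (h2 i).2
        · simpa using (h2 i).2.trans (h4 j).1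
      · intro h
        rw [Fin.lt_def] at h
        simp at h
        omega
      · refine Fin.cases ?_ (fun i => ?_) i <;> refine Fin.cases ?_ (fun j => ?_) j <;> intro h
        · simp at h
        · simpa using (h4 j).1
        · rw [Fin.lt_def] at h
          simp at h
        · simpa using h3 (show i < j by rw [Fin.lt_def] at h; simpa using h)
    · intro j
      refine Fin.addCases (fun j => ?_) (fun j => ?_) j
      · simpa using ⟨(h2 j).1, (h2 j).2.trans hy.2⟩
      · refine Fin.cases ?_ (fun j => ?_) j
        · simpa using hy
        · simpa using ⟨hy.1.trans (h4 j).1, (h4 j).2⟩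

theorem Inc_cons (m : ℕ) (t z y : ℝ) (u : Fin m → ℝ) :
    (Fin.cons y u : Fin (m+1) → ℝ) ∈ Inc (m+1) t z ↔ (t < y ∧ y < z) ∧ u ∈ Inc m y z := by
  constructor
  · rintro ⟨h1, h2⟩
    refine ⟨by simpa using h2 0, ?_, ?_⟩
    · intro i j hij
      simpa using h1 (show i.succ < j.succ by simpa using hij)
    · intro j
      exact ⟨by simpa using h1 (Fin.succ_pos j), by simpa using (h2 j.succ).2⟩
  · rintro ⟨hy, h3, h4⟩
    constructor
    · intro i j 
      refine Fin.cases ?_ (fun i => ?_) i <;> refine Fin.cases ?_ (fun j => ?_) j <;> intro h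
      · simp at h
      · simpa using (h4 j).1
      · simp at h
      · simpa using h3 (show i < j by simpa using h)
    · intro j
      refine Fin.cases ?_ (fun j => ?_) j
      · simpa using hy
      · simpa using ⟨hy.1.trans (h4 j).1, (h4 j).2⟩

theorem beta_int (a N : ℕ) (t : ℝ) :
    ∫ y in t..1, (y - t)^a * (1 - y)^N =
      (1 - t)^(a + N + 1) * (a.factorial * N.factorial / (a + N + 1).factorial) := by
  induction a generalizing N with
  | zero =>
    have h : ∀ y ∈ Set.uIcc t 1, HasDerivAt (fun y : ℝ => - (1 - y)^(N+1) / (N+1)) ((y-t)^0 * (1-y)^N) y := by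
      intro y _
      have := (((hasDerivAt_id y).const_sub 1).fun_pow (N+1)).neg.div_const ((N:ℝ)+1)
      refine this.congr_deriv ?_
      simp
      field_simp
    rw [intervalIntegral.integral_eq_sub_of_hasDerivAt h (by apply Continuous.intervalIntegrable; fun_prop)]
    have : ((N+1).factorial : ℝ) = (N+1) * N.factorial := by push_cast [Nat.factorial_succ]; ring
    have h0 : (N.factorial : ℝ) ≠ 0 := by positivity
    have h1 : (N + 1 : ℝ) ≠ 0 := by positivity
    simp only [zero_add, this, Nat.factorial_zero]
    field_simp
    simp
  | succ a ih =>
    have h : ∀ y ∈ Set.uIcc t 1, HasDerivAt (fun y : ℝ => (y-t)^(a+1) * (1 - y)^(N+1))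
        ((a+1) * ((y-t)^a * (1-y)^(N+1)) - (N+1) * ((y-t)^(a+1) * (1-y)^N)) y := by
      intro y _
      have h1 := (((hasDerivAt_id y).const_sub 1).fun_pow (N+1))
      have h2 := (((hasDerivAt_id y).sub_const t).fun_pow (a+1))
      have := h2.fun_mul h1
      refine this.congr_deriv ?_
      simp
      ring
    have key := intervalIntegral.integral_eq_sub_of_hasDerivAt h (by apply Continuous.intervalIntegrable; fun_prop)
    rw [intervalIntegral.integral_sub (by apply Continuous.intervalIntegrable; fun_prop) (by apply Continuous.intervalIntegrable; fun_prop), intervalIntegral.integral_const_mul,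
      intervalIntegral.integral_const_mul, ih (N+1)] at key
    have h1 : (N + 1 : ℝ) ≠ 0 := by positivity
    have e1 : ((N+1).factorial : ℝ) = (N+1) * N.factorial := by push_cast [Nat.factorial_succ]; ring
    have e2 : ((a+1).factorial : ℝ) = (a+1) * a.factorial := by push_cast [Nat.factorial_succ]; ring
    have e3 : a + 1 + N + 1 = a + (N+1) + 1 := by ring
    simp only [sub_self, ne_eq, Nat.succ_ne_zero, not_false_eq_true, zero_pow, mul_zero, zero_mul] at key
    rw [e3, e2]
    rw [e1] at key
    apply mul_left_cancel₀ h1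
    linear_combination -key

theorem lint_poly (f : ℝ → ℝ) (hf : Continuous f) (t y : ℝ) (h0 : 0 ≤ t) (hty : t ≤ y) (hy : y ≤ 1)
    (hpos : ∀ z, t < z → z < y → 0 ≤ f z) :
    ∫⁻ z, (Set.Ioo t y).indicator (fun z => ENNReal.ofReal (f z)) z ∂lam
      = ENNReal.ofReal (∫ z in t..y, f z) := by
  have hsub : Set.Ioo t y ⊆ Set.Icc 0 1 := fun z hz => ⟨by linarith [hz.1], by linarith [hz.2]⟩
  rw [lintegral_indicator measurableSet_Ioo, lam, Measure.restrict_restrict measurableSet_Ioo,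
    Set.inter_eq_left.mpr hsub,
    intervalIntegral.integral_of_le hty]
  rw [restrict_Ioo_eq_restrict_Ioc, ofReal_integral_eq_lintegral_ofReal]
  · exact (hf.integrableOn_Icc (a := t) (b := y)).mono_set Set.Ioc_subset_Icc_self
  · rw [← restrict_Ioo_eq_restrict_Ioc]
    filter_upwards [ae_restrict_mem measurableSet_Ioo] with z hz
    exact hpos z hz.1 hz.2

theorem Inc_vol (n : ℕ) (t y : ℝ) (h0 : 0 ≤ t) (hty : t ≤ y) (hy : y ≤ 1) :
    (Measure.pi fun _ : Fin n => lam) (Inc n t y) = ENNReal.ofReal ((y - t)^n / n.factorial) := by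
  induction n generalizing t with
  | zero =>
    have : Inc 0 t y = Set.univ := by
      ext a; simp [Inc, StrictMono]
    rw [this]; simp
  | succ n ih =>
    have hm : MeasurableSet (Inc (n+1) t y) :=
      Inc_meas (n+1) id (fun _ => t) (fun _ => y) measurable_id measurable_const measurable_const
    rw [← (mp_cons n).measure_preimage hm.nullMeasurableSet, Measure.prod_apply ((mp_cons n).measurable hm)]
    have : ∀ z : ℝ, (Measure.pi fun _ : Fin n => lam) (Prod.mk z ⁻¹' ((fun p : ℝ × (Fin n → ℝ) => (Fin.cons p.1 p.2 : Fin (n+1) → ℝ)) ⁻¹' Inc (n+1) t y))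
        = (Set.Ioo t y).indicator (fun z => ENNReal.ofReal ((y - z)^n / n.factorial)) z := by
      intro z
      by_cases hz : z ∈ Set.Ioo t y
      · rw [Set.indicator_of_mem hz, ← ih z (by linarith [hz.1]) hz.2.le]
        congr 1
        ext u
        simp only [Set.mem_preimage, Inc_cons]
        exact ⟨fun h => h.2, fun h => ⟨hz, h⟩⟩
      · rw [Set.indicator_of_notMem hz]
        convert measure_empty (μ := (Measure.pi fun _ : Fin n => lam))
        ext u
        simp only [Set.mem_preimage, Inc_cons, Set.mem_empty_iff_false, iff_false]
        exact fun h => hz h.1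
    rw [lintegral_congr this, lint_poly (fun z => (y - z)^n / n.factorial) (by fun_prop) t y h0 hty hy
      (fun z _ h => by have : 0 ≤ y - z := by linarith
                       positivity)]
    congr 1
    rw [intervalIntegral.integral_div, intervalIntegral.integral_comp_sub_left (fun z => z^n) y]
    have e1 : ((n+1).factorial : ℝ) = (n+1) * n.factorial := by push_cast [Nat.factorial_succ]; ring
    simp [e1]
    field_simp



theorem mp_left_comm {α β γ : Type*} [MeasurableSpace α] [MeasurableSpace β] [MeasurableSpace γ]
    (a : Measure α) (b : Measure β) (c : Measure γ)
    [IsProbabilityMeasure a] [IsProbabilityMeasure b] [IsProbabilityMeasure c] :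
    MeasurePreserving (fun p : α × (β × γ) => (p.2.1, (p.1, p.2.2)))
      (a.prod (b.prod c)) (b.prod (a.prod c)) := by
  have h1 := (measurePreserving_prodAssoc a b c).symm
  have h2 := (Measure.measurePreserving_swap (μ := a) (ν := b)).prod (MeasurePreserving.id c)
  have h3 := measurePreserving_prodAssoc b a c
  exact h3.comp (h2.comp h1)

theorem mp_shuffle {α β γ δ : Type*} [MeasurableSpace α] [MeasurableSpace β] [MeasurableSpace γ]
    [MeasurableSpace δ]
    (a : Measure α) (b : Measure β) (c : Measure γ) (d : Measure δ)
    [IsProbabilityMeasure a] [IsProbabilityMeasure b] [IsProbabilityMeasure c]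
    [IsProbabilityMeasure d] :
    MeasurePreserving (fun p : (α × β) × (γ × δ) => ((p.1.1, p.2.1), (p.1.2, p.2.2)))
      ((a.prod b).prod (c.prod d)) ((a.prod c).prod (b.prod d)) := by
  have h1 := measurePreserving_prodAssoc a b (c.prod d)
  have h2 := (MeasurePreserving.id a).prod (mp_left_comm b c d)
  have h3 := (measurePreserving_prodAssoc a c (b.prod d)).symm
  exact h3.comp (h2.comp h1)

theorem mp_psi (x m : ℕ) :
    MeasurePreserving (fun p : ℝ × ((Fin x → ℝ) × (Fin m → ℝ)) =>
        Fin.append p.2.1 (Fin.cons p.1 p.2.2 : Fin (m+1) → ℝ))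
      (lam.prod ((Measure.pi fun _ : Fin x => lam).prod (Measure.pi fun _ : Fin m => lam)))
      (Measure.pi fun _ : Fin (x + (m + 1)) => lam) :=
  (mp_append x (m+1)).comp (((MeasurePreserving.id _).prod (mp_cons m)).comp (mp_left_comm _ _ _))

theorem mp_phi (x m : ℕ) :
    MeasurePreserving (fun p : (ℝ × ℝ) × (((Fin x → ℝ) × (Fin x → ℝ)) × ((Fin m → ℝ) × (Fin m → ℝ))) =>
        (Fin.append p.2.1.1 (Fin.cons p.1.1 p.2.2.1 : Fin (m+1) → ℝ),
         Fin.append p.2.1.2 (Fin.cons p.1.2 p.2.2.2 : Fin (m+1) → ℝ)))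
      ((lam.prod lam).prod (((Measure.pi fun _ : Fin x => lam).prod (Measure.pi fun _ : Fin x => lam)).prod
         ((Measure.pi fun _ : Fin m => lam).prod (Measure.pi fun _ : Fin m => lam))))
      ((Measure.pi fun _ : Fin (x + (m + 1)) => lam).prod (Measure.pi fun _ : Fin (x + (m + 1)) => lam)) :=
  ((mp_psi x m).prod (mp_psi x m)).comp ((mp_shuffle _ _ _ _).comp
    ((MeasurePreserving.id _).prod (mp_shuffle _ _ _ _)))

def merge (n : ℕ) (P : ℕ → Prop) [DecidablePred P] (u v : Fin n → ℝ) : Fin n → ℝ :=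
  fun j => if P j then u j else v j

def EE (n : ℕ) (P : ℕ → Prop) [DecidablePred P] (t : ℝ) : Set ((Fin n → ℝ) × (Fin n → ℝ)) :=
  {p | p.1 ∈ Inc n t 1 ∧ merge n P p.1 p.2 ∈ Inc n t 1}

theorem merge_meas (n : ℕ) (P : ℕ → Prop) [DecidablePred P] :
    Measurable (fun p : (Fin n → ℝ) × (Fin n → ℝ) => merge n P p.1 p.2) := by
  refine measurable_pi_lambda _ fun j => ?_
  unfold merge
  by_cases h : P j <;> simp only [h, if_true, if_false] <;> fun_prop

theorem EE_meas (n : ℕ) (P : ℕ → Prop) [DecidablePred P] (t : ℝ) : MeasurableSet (EE n P t) :=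
  (Inc_meas n (fun p : (Fin n → ℝ) × (Fin n → ℝ) => p.1) (fun _ => t) (fun _ => 1) (by fun_prop)
    (by fun_prop) (by fun_prop)).inter
  (Inc_meas n (fun p : (Fin n → ℝ) × (Fin n → ℝ) => merge n P p.1 p.2) (fun _ => t) (fun _ => 1)
    (merge_meas n P) (by fun_prop) (by fun_prop))

def pos : ℕ → List ℕ → List ℕ
  | _, [] => []
  | _, [_] => []
  | b, x :: y :: L => (b + x) :: pos (b + x + 1) (y :: L)

theorem pos_shift (d : ℕ) (L : List ℕ) (x b : ℕ) :
    pos (d + b) (x :: L) = (pos b (x :: L)).map (d + ·) := by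
  induction L generalizing x b with
  | nil => simp [pos]
  | cons y L ih =>
    simp only [pos, List.map_cons]
    rw [← ih, add_assoc, add_assoc, add_assoc]

theorem mem_pos_shift (d k x : ℕ) (L : List ℕ) :
    d + k ∈ pos d (x :: L) ↔ k ∈ pos 0 (x :: L) := by
  have := pos_shift d L x 0
  rw [add_zero] at this
  rw [this]
  simp

theorem le_of_mem_pos (L : List ℕ) (b k : ℕ) (h : k ∈ pos b L) : b ≤ k := by
  cases L with
  | nil => simp [pos] at h
  | cons x L =>
    have := pos_shift b L x 0
    rw [add_zero] at this
    rw [this] at h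
    simp at h
    obtain ⟨a, _, rfl⟩ := h
    omega

theorem merge_append (x m : ℕ) (P : ℕ → Prop) [DecidablePred P] (hx : P x) (hlt : ∀ k < x, ¬ P k)
    (a b : Fin x → ℝ) (y d : ℝ) (u v : Fin m → ℝ) :
    merge (x + (m+1)) P (Fin.append a (Fin.cons y u : Fin (m+1) → ℝ)) (Fin.append b (Fin.cons d v : Fin (m+1) → ℝ))
     = Fin.append b (Fin.cons y (merge m (fun k => P (x + 1 + k)) u v) : Fin (m+1) → ℝ) := by
  funext j
  refine Fin.addCases (fun j => ?_) (fun j => ?_) j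
  · simp [merge, hlt j j.2]
  · refine Fin.cases ?_ (fun j => ?_) j
    · simp [merge, hx]
    · have : x + (j + 1 : ℕ) = x + 1 + j := by ring
      simp [merge, this]

theorem EE_vol (L : List ℕ) : ∀ (x n N : ℕ) (P : ℕ → Prop) [DecidablePred P] (t : ℝ),
    n + 1 = (x :: L).sum + (x :: L).length → N + 1 = 2 * (x :: L).sum + (x :: L).length →
    (∀ k < n, P k ↔ k ∈ pos 0 (x :: L)) → 0 ≤ t → t ≤ 1 →
    ((Measure.pi fun _ : Fin n => lam).prod (Measure.pi fun _ : Fin n => lam)) (EE n P t) =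
      ENNReal.ofReal ((1 - t)^N / N.factorial * (((x :: L).map fun x => (2 * x).choose x).prod : ℕ)) := by
  induction L with
  | nil =>
    intro x n N P _ t hn hN hP h0 h1
    simp at hn hN
    subst hn hN
    have : EE n P t = Inc n t 1 ×ˢ Inc n t 1 := by
      ext p
      have : merge n P p.1 p.2 = p.2 := by
        funext j
        have := hP j j.2
        simp [pos] at this
        simp [merge, this]
      simp [EE, this]
    have p1 : 0 ≤ 1 - t := by linarith
    rw [this, Measure.prod_prod, Inc_vol n t 1 h0 h1 le_rfl, ← ENNReal.ofReal_mul (by positivity)]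
    congr 1
    have h := Nat.choose_mul_factorial_mul_factorial (show n ≤ 2 * n by omega)
    rw [show 2 * n - n = n by omega] at h
    have h' : ((2*n).choose n : ℝ) * n.factorial * n.factorial = (2*n).factorial := by exact_mod_cast h
    simp
    rw [← h']
    have : ((2*n).choose n : ℝ) ≠ 0 := by
      have := Nat.choose_pos (show n ≤ 2 * n by omega)
      positivity
    field_simp
    ring
  | cons y L ih =>
    intro x n N P _ t hn hN hP h0 h1
    obtain ⟨m, rfl⟩ : ∃ m, n = x + (m + 1) := ⟨n - x - 1, by simp at hn; omega⟩
    obtain ⟨K, rfl⟩ : ∃ K, N = 2 * x + K + 1 := ⟨N - 2 * x - 1, by simp at hN; omega⟩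
    have hx : P x := by rw [hP x (by omega)]; simp [pos]
    have hlt : ∀ k < x, ¬ P k := by
      intro k hk
      rw [hP k (by omega)]
      simp only [pos, List.mem_cons, not_or]
      exact ⟨by omega, fun h => by have := le_of_mem_pos _ _ _ h; omega⟩
    have hP' : ∀ k < m, P (x + 1 + k) ↔ k ∈ pos 0 (y :: L) := by
      intro k hk
      rw [hP _ (by omega)]
      simp only [pos, List.mem_cons]
      rw [zero_add, mem_pos_shift]
      simp
      omega
    have ih' := ih y m K (fun k => P (x + 1 + k))
    set C : ℕ := (((y :: L).map fun x => (2 * x).choose x).prod : ℕ) with hC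
    rw [← (mp_phi x m).measure_preimage (EE_meas _ P t).nullMeasurableSet,
      Measure.prod_apply ((mp_phi x m).measurable (EE_meas _ P t))]
    have key : ∀ z : ℝ × ℝ, ((((Measure.pi fun _ : Fin x => lam).prod (Measure.pi fun _ : Fin x => lam)).prod
         ((Measure.pi fun _ : Fin m => lam).prod (Measure.pi fun _ : Fin m => lam))))
         (Prod.mk z ⁻¹' ((fun p : (ℝ × ℝ) × (((Fin x → ℝ) × (Fin x → ℝ)) × ((Fin m → ℝ) × (Fin m → ℝ))) =>
        (Fin.append p.2.1.1 (Fin.cons p.1.1 p.2.2.1 : Fin (m+1) → ℝ),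
         Fin.append p.2.1.2 (Fin.cons p.1.2 p.2.2.2 : Fin (m+1) → ℝ))) ⁻¹' EE (x + (m+1)) P t))
        = (Set.Ioo t 1).indicator (fun z => ENNReal.ofReal (((z - t)^(2*x) * (1 - z)^K) * (C / (x.factorial * x.factorial * K.factorial)))) z.1 := by
      rintro ⟨z, d⟩
      by_cases hz : z ∈ Set.Ioo t 1
      · rw [Set.indicator_of_mem hz]
        have : (Prod.mk (z, d) ⁻¹' ((fun p : (ℝ × ℝ) × (((Fin x → ℝ) × (Fin x → ℝ)) × ((Fin m → ℝ) × (Fin m → ℝ))) =>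
        (Fin.append p.2.1.1 (Fin.cons p.1.1 p.2.2.1 : Fin (m+1) → ℝ),
         Fin.append p.2.1.2 (Fin.cons p.1.2 p.2.2.2 : Fin (m+1) → ℝ))) ⁻¹' EE (x + (m+1)) P t))
          = (Inc x t z ×ˢ Inc x t z) ×ˢ EE m (fun k => P (x + 1 + k)) z := by
          ext ⟨⟨a, b⟩, ⟨u, v⟩⟩
          simp only [Set.mem_preimage, EE, Set.mem_ofPred_eq, merge_append x m P hx hlt, Inc_append_cons,
            Set.mem_prod]
          have : t < z ∧ z < 1 := hz
          tauto
        rw [this, Measure.prod_prod, Measure.prod_prod, Inc_vol x t z h0 hz.1.le hz.2.le,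
          ih' z (by simp at hn ⊢; omega) (by simp at hN ⊢; omega) hP' (by linarith [hz.1]) hz.2.le]
        have p1 : 0 ≤ z - t := by linarith [hz.1]
        have p2 : 0 ≤ 1 - z := by linarith [hz.2]
        rw [← ENNReal.ofReal_mul (by positivity), ← ENNReal.ofReal_mul (by positivity)]
        congr 1
        field_simp
        ring
      · rw [Set.indicator_of_notMem hz]
        refine (congrArg _ ?_).trans measure_empty
        ext ⟨⟨a, b⟩, ⟨u, v⟩⟩
        simp only [Set.mem_preimage, EE, Set.mem_ofPred_eq, Inc_append_cons,
            Set.mem_empty_iff_false, iff_false]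
        exact fun h => hz h.1.2.1
    rw [lintegral_congr key]
    have hmf : Measurable ((Set.Ioo t 1).indicator (fun z => ENNReal.ofReal (((z - t)^(2*x) * (1 - z)^K) * (C / (x.factorial * x.factorial * K.factorial))))) :=
      Measurable.indicator (by fun_prop) measurableSet_Ioo
    have hfst : MeasurePreserving (Prod.fst : ℝ × ℝ → ℝ) (lam.prod lam) lam := measurePreserving_fst
    rw [hfst.lintegral_comp hmf, lint_poly (fun z => ((z - t)^(2*x) * (1 - z)^K) * (C / (x.factorial * x.factorial * K.factorial)))
      (by fun_prop) t 1 h0 h1 le_rfl (fun z h h' => by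
        have p1 : 0 ≤ z - t := by linarith
        have p2 : 0 ≤ 1 - z := by linarith
        positivity), intervalIntegral.integral_mul_const, beta_int]
    congr 1
    have h := Nat.choose_mul_factorial_mul_factorial (show x ≤ 2 * x by omega)
    rw [show 2 * x - x = x by omega] at h
    have h' : ((2*x).choose x : ℝ) * x.factorial * x.factorial = (2*x).factorial := by exact_mod_cast h
    rw [List.map_cons, List.prod_cons, ← hC, Nat.cast_mul, ← h']
    have : ((2*x).choose x : ℝ) ≠ 0 := by
      have := Nat.choose_pos (show x ≤ 2 * x by omega)
      positivity
    field_simp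



theorem card_initSeg (n : ℕ) (σ : Equiv.Perm (Fin n)) (j : Fin n) : (initSeg n σ j).card = j := by
  rw [initSeg, Finset.card_image_of_injective _ σ.injective]
  have : (Finset.univ.filter fun i => i < j) = Finset.Iio j := by ext; simp
  rw [this, Fin.card_Iio]

theorem pathEdge_inj {n : ℕ} {σ σ' : Equiv.Perm (Fin n)} {i j : Fin n}
    (h : pathEdge n σ i = pathEdge n σ' j) : i = j := by
  have h1 := congrArg (fun e => e.1.card) h
  simp only [pathEdge, card_initSeg] at h1
  exact Fin.ext h1

theorem pairProb_eq (n : ℕ) (σ σ' : Equiv.Perm (Fin n)) (P : ℕ → Prop) [DecidablePred P]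
    (hP : ∀ k : Fin n, k ∈ sharedSteps n σ σ' ↔ P k) :
    pairProb n σ σ' =
      (((Measure.pi fun _ : Fin n => lam).prod (Measure.pi fun _ : Fin n => lam)) (EE n P 0)).toReal := by
  have hsh : ∀ k : Fin n, pathEdge n σ k = pathEdge n σ' k ↔ P k := by
    intro k; rw [← hP k]; simp [sharedSteps]
  let e1 : Fin n ⊕ {j : Fin n // ¬ P j} → EdgeIdx n :=
    Sum.elim (fun j => pathEdge n σ j) (fun j => pathEdge n σ' j.1)
  let e2 : Fin n ⊕ {j : Fin n // ¬ P j} → Fin n ⊕ Fin n := Sum.map id Subtype.val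
  have he1 : Function.Injective e1 := by
    rintro (i | i) (j | j) h
    · exact congrArg _ (pathEdge_inj h)
    · exfalso
      have hij := pathEdge_inj (σ := σ) (σ' := σ') h
      subst hij
      exact j.2 ((hsh _).1 h)
    · exfalso
      have hij := pathEdge_inj (σ := σ') (σ' := σ) h
      subst hij
      exact i.2 ((hsh _).1 h.symm)
    · exact congrArg _ (Subtype.ext (pathEdge_inj h))
  have he2 : Function.Injective e2 :=
    Function.injective_id.sumMap Subtype.val_injective
  have m1 := mp_precomp e1 he1
  have m2 := (mp_precomp e2 he2).comp
    (measurePreserving_sumPiEquivProdPi_symm (fun _ : Fin n ⊕ Fin n => lam))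
  let f : (Fin n ⊕ {j : Fin n // ¬ P j} → ℝ) → Fin n → ℝ :=
    fun η j => if h : P j then η (Sum.inl j) else η (Sum.inr ⟨j, h⟩)
  have hf : Measurable f := by
    refine measurable_pi_lambda _ fun j => ?_
    by_cases h : P j <;> simp only [f, h, dif_pos, dif_neg, not_false_eq_true] <;> fun_prop
  let F : Set (Fin n ⊕ {j : Fin n // ¬ P j} → ℝ) :=
    {η | (fun j => η (Sum.inl j)) ∈ Inc n 0 1} ∩ {η | f η ∈ Inc n 0 1}
  have hF : MeasurableSet F :=
    (Inc_meas n (fun (η : Fin n ⊕ {j : Fin n // ¬ P j} → ℝ) j => η (Sum.inl j)) (fun _ => 0) (fun _ => 1) (by fun_prop)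
    (by fun_prop) (by fun_prop)).inter
    (Inc_meas n f (fun _ => 0) (fun _ => 1) hf (by fun_prop) (by fun_prop))
  have r1 := m1.measure_preimage hF.nullMeasurableSet
  have r2 := m2.measure_preimage hF.nullMeasurableSet
  have hae : ∀ᵐ ω ∂(Measure.pi fun _ : EdgeIdx n => lam), ∀ e, 0 < ω e ∧ ω e < 1 := by
    rw [ae_all_iff]
    intro e
    have h0 : ∀ᵐ z ∂lam, 0 < z ∧ z < 1 := by
      rw [lam, ← restrict_Ioo_eq_restrict_Icc]
      exact ae_restrict_mem measurableSet_Ioo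
    exact (measurePreserving_eval (fun _ : EdgeIdx n => lam) e).quasiMeasurePreserving.ae h0
  have hcube : cubeMeasure n = Measure.pi fun _ : EdgeIdx n => lam := rfl
  rw [pairProb, hcube]
  congr 1
  calc _ = (Measure.pi fun _ : EdgeIdx n => lam) ((fun ω j => ω (e1 j)) ⁻¹' F) := by
        apply measure_congr
        filter_upwards [hae] with ω hω
        have hfe : f (fun j => ω (e1 j)) = fun j => ω (pathEdge n σ' j) := by
          funext j
          by_cases h : P j
          · simp only [f, h, dif_pos, e1, Sum.elim_inl, (hsh j).2 h]
          · simp only [f, h, dif_neg, not_false_eq_true, e1, Sum.elim_inr]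
        have : ((fun ω j => ω (e1 j)) ⁻¹' F) ω ↔ (Accessible n σ ω ∧ Accessible n σ' ω) := by
          change ((fun j => ω (e1 (Sum.inl j))) ∈ Inc n 0 1 ∧ f (fun j => ω (e1 j)) ∈ Inc n 0 1) ↔ _
          rw [hfe]
          simp only [Inc, Accessible, e1, Sum.elim_inl]
          exact ⟨fun h => ⟨h.1.1, h.2.1⟩, fun h => ⟨⟨h.1, fun j => hω _⟩, ⟨h.2, fun j => hω _⟩⟩⟩
        exact propext this.symm
    _ = _ := by
        rw [r1, ← r2]
        congr 1



theorem mem_shared_iff {n : ℕ} (τ : Equiv.Perm (Fin n)) (j : Fin n) :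
    j ∈ sharedSteps n τ 1 ↔ τ j = j ∧ ∀ i < j, τ i < j := by
  simp only [sharedSteps, Finset.mem_filter, Finset.mem_univ, true_and, pathEdge, Prod.mk.injEq,
    Equiv.Perm.coe_one, id_eq]
  rw [and_comm]
  refine and_congr_right fun _ => ?_
  have h1 : initSeg n 1 j = Finset.univ.filter fun i => i < j := by
    simp [initSeg]
  constructor
  · intro h i hi
    have : τ i ∈ initSeg n τ j := by
      simp only [initSeg, Finset.mem_image, Finset.mem_filter, Finset.mem_univ, true_and]
      exact ⟨i, hi, rfl⟩
    rw [h, h1] at this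
    simpa using this
  · intro h
    apply Finset.eq_of_subset_of_card_le
    · intro k hk
      simp only [initSeg, Finset.mem_image, Finset.mem_filter, Finset.mem_univ, true_and] at hk
      obtain ⟨i, hi, rfl⟩ := hk
      rw [h1]
      simpa using h i hi
    · rw [card_initSeg, card_initSeg]

noncomputable def NN (n : ℕ) (P : ℕ → Prop) : ℕ :=
  Nat.card {τ : Equiv.Perm (Fin n) // ∀ j : Fin n, j ∈ sharedSteps n τ 1 ↔ P j}

def joinPerm {a b : ℕ} (τ₁ : Equiv.Perm (Fin a)) (τ₂ : Equiv.Perm (Fin b)) :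
    Equiv.Perm (Fin (a + b)) :=
  finSumFinEquiv.permCongr (Equiv.Perm.sumCongr τ₁ τ₂)

theorem joinPerm_left {a b : ℕ} (τ₁ : Equiv.Perm (Fin a)) (τ₂ : Equiv.Perm (Fin b)) (i : Fin a) :
    joinPerm τ₁ τ₂ (Fin.castAdd b i) = Fin.castAdd b (τ₁ i) := by
  simp [joinPerm, Equiv.permCongr_apply]

theorem joinPerm_right {a b : ℕ} (τ₁ : Equiv.Perm (Fin a)) (τ₂ : Equiv.Perm (Fin b)) (i : Fin b) :
    joinPerm τ₁ τ₂ (Fin.natAdd a i) = Fin.natAdd a (τ₂ i) := by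
  simp [joinPerm, Equiv.permCongr_apply]

theorem shared_join_left {a b : ℕ} (τ₁ : Equiv.Perm (Fin a)) (τ₂ : Equiv.Perm (Fin b)) (i : Fin a) :
    Fin.castAdd b i ∈ sharedSteps (a + b) (joinPerm τ₁ τ₂) 1 ↔ i ∈ sharedSteps a τ₁ 1 := by
  rw [mem_shared_iff, mem_shared_iff, joinPerm_left, Fin.castAdd_inj]
  refine and_congr_right fun _ => ⟨fun h k hk => ?_, fun h k => ?_⟩
  · have := h (Fin.castAdd b k) hk
    rw [joinPerm_left] at this
    exact this
  · refine Fin.addCases (fun k hk => ?_) (fun k hk => ?_) k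
    · rw [joinPerm_left]; exact h k hk
    · rw [Fin.lt_def] at hk; simp at hk; omega

theorem shared_join_right {a b : ℕ} (τ₁ : Equiv.Perm (Fin a)) (τ₂ : Equiv.Perm (Fin b)) (i : Fin b) :
    Fin.natAdd a i ∈ sharedSteps (a + b) (joinPerm τ₁ τ₂) 1 ↔ i ∈ sharedSteps b τ₂ 1 := by
  rw [mem_shared_iff, mem_shared_iff, joinPerm_right, Fin.natAdd_inj]
  refine and_congr_right fun _ => ⟨fun h k hk => ?_, fun h k => ?_⟩
  · have := h (Fin.natAdd a k) (by rw [Fin.lt_def] at hk ⊢; simpa using hk)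
    rw [joinPerm_right] at this
    rw [Fin.lt_def] at this ⊢
    simpa using this
  · refine Fin.addCases (fun k hk => ?_) (fun k hk => ?_) k
    · rw [joinPerm_left, Fin.lt_def]; simp; omega
    · rw [joinPerm_right]
      have := h k (by rw [Fin.lt_def] at hk ⊢; simpa using hk)
      rw [Fin.lt_def] at this ⊢
      simpa using this

theorem NN_add (a b : ℕ) (P : ℕ → Prop)
    (hpres : ∀ τ : Equiv.Perm (Fin (a + b)), (∀ j : Fin (a + b), j ∈ sharedSteps (a + b) τ 1 ↔ P j) →
      ∀ i : Fin (a+b), (i : ℕ) < a → (τ i : ℕ) < a) :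
    NN (a + b) P = NN a P * NN b (fun k => P (a + k)) := by
  unfold NN
  rw [← Nat.card_prod]
  symm
  refine Nat.card_congr (Equiv.ofBijective (fun p => ⟨joinPerm p.1.1 p.2.1, ?_⟩) ⟨?_, ?_⟩)
  · intro j
    refine Fin.addCases (fun i => ?_) (fun i => ?_) j
    · rw [shared_join_left, p.1.2]; simp
    · rw [shared_join_right, p.2.2]; simp
  · rintro ⟨⟨τ₁, h1⟩, ⟨τ₂, h2⟩⟩ ⟨⟨τ₁', h1'⟩, ⟨τ₂', h2'⟩⟩ h
    have h : joinPerm τ₁ τ₂ = joinPerm τ₁' τ₂' := congrArg Subtype.val h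
    have e1 : τ₁ = τ₁' := by
      ext i
      have := congrArg (fun τ => τ (Fin.castAdd b i)) h
      simp only [joinPerm_left, Fin.castAdd_inj] at this
      rw [this]
    have e2 : τ₂ = τ₂' := by
      ext i
      have := congrArg (fun τ => τ (Fin.natAdd a i)) h
      simp only [joinPerm_right, Fin.natAdd_inj] at this
      rw [this]
    subst e1 e2
    rfl
  · rintro ⟨τ, hτ⟩
    have hp := hpres τ hτ
    have hmem : (finSumFinEquiv (m := a) (n := b)).symm.permCongr τ ∈ (Equiv.Perm.sumCongrHom (Fin a) (Fin b)).range := by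
      apply Equiv.Perm.mem_sumCongrHom_range_of_perm_mapsTo_inl
      rintro _ ⟨i, rfl⟩
      have := hp (Fin.castAdd b i) (by simp)
      refine ⟨⟨_, this⟩, ?_⟩
      simp only [Equiv.permCongr_apply, Equiv.symm_symm, finSumFinEquiv_apply_left]
      rw [Equiv.eq_symm_apply]
      simp
    obtain ⟨⟨τ₁, τ₂⟩, h12⟩ := hmem
    have hj : joinPerm τ₁ τ₂ = τ := by
      have : Equiv.Perm.sumCongr τ₁ τ₂ = (finSumFinEquiv (m := a) (n := b)).symm.permCongr τ := h12
      rw [joinPerm, this]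
      ext i
      simp [Equiv.permCongr_apply]
    refine ⟨⟨⟨τ₁, fun i => ?_⟩, ⟨τ₂, fun i => ?_⟩⟩, Subtype.ext hj⟩
    · rw [← shared_join_left τ₁ τ₂, hj, hτ]; simp
    · rw [← shared_join_right τ₁ τ₂, hj, hτ]; simp

theorem NN_zero_block (x : ℕ) (P : ℕ → Prop) (h : ∀ k < x, ¬ P k) : NN x P = w x := by
  unfold NN w
  refine Nat.card_congr (Equiv.subtypeEquivRight fun τ => ?_)
  rw [Finset.eq_empty_iff_forall_notMem]
  exact forall_congr' fun j => by simp [h j j.2]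

theorem NN_one (P : ℕ → Prop) (h : P 0) : NN 1 P = 1 := by
  unfold NN
  rw [Nat.card_eq_one_iff_unique]
  refine ⟨⟨fun a b => Subtype.ext (Subsingleton.elim _ _)⟩, ⟨1, fun j => ?_⟩⟩
  rw [mem_shared_iff]
  have : j = 0 := Subsingleton.elim _ _
  subst this
  simp [h]

theorem NN_count (L : List ℕ) : ∀ (x n : ℕ) (P : ℕ → Prop),
    n + 1 = (x :: L).sum + (x :: L).length → (∀ k < n, P k ↔ k ∈ pos 0 (x :: L)) →
    NN n P = ((x :: L).map w).prod := by
  induction L with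
  | nil =>
    intro x n P hn hP
    simp at hn
    subst hn
    rw [NN_zero_block n P (fun k hk => by rw [hP k hk]; simp [pos])]
    simp
  | cons y L ih =>
    intro x n P hn hP
    obtain ⟨m, rfl⟩ : ∃ m, n = (x + 1) + m := ⟨n - x - 1, by simp at hn; omega⟩
    have hx : P x := by rw [hP x (by omega)]; simp [pos]
    have hlt : ∀ k < x, ¬ P k := by
      intro k hk
      rw [hP k (by omega)]
      simp only [pos, List.mem_cons, not_or]
      exact ⟨by omega, fun h => by have := le_of_mem_pos _ _ _ h; omega⟩
    have hP' : ∀ k < m, P (x + 1 + k) ↔ k ∈ pos 0 (y :: L) := by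
      intro k hk
      rw [hP _ (by omega)]
      simp only [pos, List.mem_cons]
      rw [zero_add, mem_pos_shift]
      simp
      omega
    rw [NN_add (x+1) m, NN_add x 1, NN_zero_block x P hlt, NN_one _ (by simpa using hx),
      ih y m _ (by simp at hn ⊢; omega) hP']
    · simp
    · intro τ hτ i hi
      have h1 := (hτ ⟨x, by omega⟩).2 hx
      rw [mem_shared_iff] at h1
      have := h1.2 i hi
      exact this
    · intro τ hτ i hi
      have h1 := (hτ ⟨x, by omega⟩).2 hx
      rw [mem_shared_iff] at h1
      by_cases hix : i.val < x
      · have h2 := h1.2 i hix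
        rw [Fin.lt_def] at h2
        simp at h2
        omega
      · have : i = ⟨x, by omega⟩ := Fin.ext (by simp; omega)
        rw [this, h1.1]
        simp

theorem shared_inv_mul (n : ℕ) (σ τ : Equiv.Perm (Fin n)) :
    sharedSteps n σ (σ * τ) = sharedSteps n τ 1 := by
  ext j
  simp only [sharedSteps, Finset.mem_filter, Finset.mem_univ, true_and, pathEdge, Prod.mk.injEq,
    initSeg, Equiv.Perm.coe_mul, Equiv.Perm.coe_one, Function.comp, Finset.image_id, id_eq]
  rw [← Finset.image_image, (Finset.image_injective σ.injective).eq_iff, σ.injective.eq_iff]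
  exact ⟨fun h => ⟨h.1.symm, h.2.symm⟩, fun h => ⟨h.1.symm, h.2.symm⟩⟩



def gapsFrom (b n : ℕ) (l : List ℕ) : List ℕ :=
  List.zipWith (fun a b => b - a) (b :: l.map (· + 1)) (l ++ [n])

theorem gapsFrom_nil (b n : ℕ) : gapsFrom b n [] = [n - b] := by simp [gapsFrom]

theorem gapsFrom_cons (b n a : ℕ) (l : List ℕ) :
    gapsFrom b n (a :: l) = (a - b) :: gapsFrom (a + 1) n l := by simp [gapsFrom]

theorem gaps_pos (L : List ℕ) : ∀ (x b n : ℕ), b + (x :: L).sum + L.length = n →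
    gapsFrom b n (pos b (x :: L)) = x :: L := by
  induction L with
  | nil => intro x b n h; simp at h; simp [pos, gapsFrom_nil]; omega
  | cons y L ih =>
    intro x b n h
    simp only [pos, gapsFrom_cons]
    rw [ih y (b + x + 1) n (by simp at h ⊢; omega)]
    simp

theorem pos_gaps (n : ℕ) (l : List ℕ) : ∀ b ≤ n, l.Pairwise (· < ·) → (∀ a ∈ l, b ≤ a ∧ a < n) →
    pos b (gapsFrom b n l) = l ∧ (gapsFrom b n l).length = l.length + 1 ∧
      b + (gapsFrom b n l).sum + l.length = n := by
  induction l with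
  | nil => intro b hb _ _; simp [gapsFrom_nil, pos]; omega
  | cons a l ih =>
    intro b hb hs hm
    rw [List.pairwise_cons] at hs
    have ha := hm a (by simp)
    obtain ⟨h1, h2, h3⟩ := ih (a + 1) (by omega) hs.2 (fun c hc => ⟨hs.1 c hc, (hm c (by simp [hc])).2⟩)
    rw [gapsFrom_cons]
    cases hl : gapsFrom (a + 1) n l with
    | nil => rw [hl] at h2; simp at h2
    | cons y L =>
      rw [hl] at h1 h2 h3
      refine ⟨?_, ?_, ?_⟩
      · simp only [pos]
        rw [show b + (a - b) = a by omega, h1]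
      · simp at h2 ⊢; omega
      · simp at h3 ⊢; omega

theorem pos_sorted (L : List ℕ) : ∀ (x b n : ℕ), b + (x :: L).sum + L.length = n →
    (pos b (x :: L)).Pairwise (· < ·) ∧ ∀ a ∈ pos b (x :: L), a < n := by
  induction L with
  | nil => intro x b n h; simp [pos]
  | cons y L ih =>
    intro x b n h
    obtain ⟨h1, h2⟩ := ih y (b + x + 1) n (by simp at h ⊢; omega)
    simp only [pos, List.pairwise_cons, List.mem_cons]
    refine ⟨⟨fun c hc => ?_, h1⟩, ?_⟩
    · have := le_of_mem_pos _ _ _ hc; omega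
    · rintro a (rfl | ha)
      · simp at h; omega
      · exact h2 a ha

def GS (n : ℕ) (S : Finset (Fin n)) : List ℕ := gapsOfList n ((S.sort (· ≤ ·)).map Fin.val)

theorem sort_val_sorted {n : ℕ} (S : Finset (Fin n)) :
    ((S.sort (· ≤ ·)).map Fin.val).Pairwise (· < ·) := by
  rw [List.pairwise_map]
  exact (Finset.sortedLT_sort S).pairwise

theorem GS_facts (n : ℕ) (S : Finset (Fin n)) :
    pos 0 (GS n S) = (S.sort (· ≤ ·)).map Fin.val ∧ (GS n S).length = S.card + 1 ∧
      (GS n S).sum + S.card = n := by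
  have := pos_gaps n ((S.sort (· ≤ ·)).map Fin.val) 0 (Nat.zero_le _) (sort_val_sorted S)
    (fun a ha => by
      rw [List.mem_map] at ha
      obtain ⟨i, _, rfl⟩ := ha
      exact ⟨Nat.zero_le _, i.2⟩)
  simp only [List.length_map, Finset.length_sort, zero_add] at this
  exact this

theorem GS_mem (n : ℕ) (S : Finset (Fin n)) (j : Fin n) : j ∈ S ↔ (j : ℕ) ∈ pos 0 (GS n S) := by
  rw [(GS_facts n S).1]
  simp only [List.mem_map, Finset.mem_sort]
  exact ⟨fun h => ⟨j, h, rfl⟩, fun ⟨a, h, e⟩ => by rwa [← Fin.ext e]⟩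

theorem GS_iff (n : ℕ) (S : Finset (Fin n)) (L : List ℕ) (hn : n + 1 = L.sum + L.length) (hL : L ≠ []) :
    GS n S = L ↔ ∀ j : Fin n, j ∈ S ↔ (j : ℕ) ∈ pos 0 L := by
  constructor
  · rintro rfl j
    exact GS_mem n S j
  · intro h
    obtain ⟨x, L, rfl⟩ := List.exists_cons_of_ne_nil hL
    have hn' : 0 + (x :: L).sum + L.length = n := by simp at hn ⊢; omega
    obtain ⟨h1, h2⟩ := pos_sorted L x 0 n hn'
    have : (S.sort (· ≤ ·)).map Fin.val = pos 0 (x :: L) := by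
      refine List.Perm.eq_of_pairwise (le := (· < ·)) (fun a b _ _ h1 h2 => absurd h1 (by omega)) (sort_val_sorted S) h1 ?_
      rw [List.perm_ext_iff_of_nodup ((sort_val_sorted S).imp (fun h => by omega)) (h1.imp (fun h => by omega))]
      intro a
      simp only [List.mem_map, Finset.mem_sort]
      constructor
      · rintro ⟨j, hj, rfl⟩; exact (h j).1 hj
      · intro ha; exact ⟨⟨a, h2 a ha⟩, (h _).2 ha, rfl⟩
    exact (congrArg (gapsFrom 0 n) this).trans (gaps_pos L x 0 n hn')

def LS : ℕ → ℕ → Finset (List ℕ)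
  | 0, N => if N = 0 then {[]} else ∅
  | k + 1, N => (Finset.HasAntidiagonal.antidiagonal N).biUnion fun p => (LS k p.2).image (List.cons p.1)

theorem mem_LS (k N : ℕ) (L : List ℕ) : L ∈ LS k N ↔ L.length = k ∧ L.sum = N := by
  induction k generalizing N L with
  | zero =>
    rw [LS]
    split_ifs with h
    · subst h
      simp only [Finset.mem_singleton, List.length_eq_zero_iff]
      exact ⟨fun h => by simp [h], fun h => h.1⟩
    · simp only [Finset.notMem_empty, List.length_eq_zero_iff, false_iff]
      rintro ⟨rfl, h'⟩
      exact h h'.symm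
  | succ k ih =>
    simp only [LS, Finset.mem_biUnion, Finset.mem_image, ih, Finset.HasAntidiagonal.mem_antidiagonal]
    constructor
    · rintro ⟨⟨i, j⟩, h, L, ⟨h1, h2⟩, rfl⟩
      simp at *
      omega
    · rintro ⟨h1, h2⟩
      obtain ⟨x, L, rfl⟩ := List.exists_cons_of_length_eq_add_one h1
      exact ⟨(x, L.sum), by simpa using h2, L, ⟨by simpa using h1, rfl⟩, rfl⟩

theorem sum_LS_succ (k N : ℕ) (F : List ℕ → ℝ) :
    ∑ L ∈ LS (k + 1) N, F L = ∑ p ∈ Finset.HasAntidiagonal.antidiagonal N, ∑ L ∈ LS k p.2, F (p.1 :: L) := by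
  rw [LS, Finset.sum_biUnion]
  · refine Finset.sum_congr rfl fun p _ => ?_
    rw [Finset.sum_image]
    intro a _ b _ h
    exact (List.cons.inj h).2
  · intro p hp q hq hpq
    rw [Function.onFun, Finset.disjoint_left]
    intro L h1 h2
    simp only [Finset.mem_image, mem_LS] at h1 h2
    obtain ⟨a, ha, rfl⟩ := h1
    obtain ⟨b, hb, h⟩ := h2
    obtain ⟨e1, rfl⟩ := List.cons.inj h
    exact hpq (Prod.ext e1.symm (ha.2.symm.trans hb.2))

def nz (L : List ℕ) : ℕ := (L.filter (· != 0)).length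

noncomputable def aa (φ : ℕ → ℝ) (k N g : ℕ) : ℝ :=
  ∑ L ∈ LS k N, if nz L = g then (L.map φ).prod else 0

theorem nz_cons_zero (L : List ℕ) : nz (0 :: L) = nz L := by simp [nz]
theorem nz_cons_pos (x : ℕ) (hx : x ≠ 0) (L : List ℕ) : nz (x :: L) = nz L + 1 := by simp [nz, hx]

theorem aa_of_lt (φ : ℕ → ℝ) (k N g : ℕ) (h : k < g) : aa φ k N g = 0 := by
  refine Finset.sum_eq_zero fun L hL => if_neg ?_
  rw [mem_LS] at hL
  have : nz L ≤ L.length := List.length_filter_le _ _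
  omega

theorem aa_succ (φ : ℕ → ℝ) (h0 : φ 0 = 1) (k N g : ℕ) :
    aa φ (k + 1) N g = aa φ k N g +
      ∑ p ∈ (Finset.HasAntidiagonal.antidiagonal N).filter (fun p => p.1 ≠ 0),
        φ p.1 * ∑ L ∈ LS k p.2, if nz L + 1 = g then (L.map φ).prod else 0 := by
  unfold aa
  rw [sum_LS_succ, ← Finset.sum_filter_add_sum_filter_not _ (fun p : ℕ × ℕ => p.1 = 0)]
  congr 1
  · have : (Finset.HasAntidiagonal.antidiagonal N).filter (fun p : ℕ × ℕ => p.1 = 0) = {(0, N)} := by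
      ext ⟨i, j⟩
      simp
      omega
    rw [this, Finset.sum_singleton]
    simp [nz_cons_zero, h0]
  · refine Finset.sum_congr rfl fun p hp => ?_
    rw [Finset.mem_filter] at hp
    rw [Finset.mul_sum]
    refine Finset.sum_congr rfl fun L _ => ?_
    rw [nz_cons_pos _ hp.2]
    split_ifs <;> simp

theorem aa_choose (φ : ℕ → ℝ) (h0 : φ 0 = 1) (k : ℕ) : ∀ N g : ℕ,
    aa φ k N g = (k.choose g : ℝ) * aa φ g N g := by
  induction k with
  | zero =>
    intro N g
    cases g with
    | zero => simp
    | succ g => rw [aa_of_lt _ _ _ _ (by omega)]; simp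
  | succ k ih =>
    intro N g
    cases g with
    | zero =>
      rw [aa_succ φ h0, ih N 0]
      simp
    | succ g =>
      rw [aa_succ φ h0 k, aa_succ φ h0 g, ih N (g+1), aa_of_lt φ g N (g+1) (by omega), zero_add]
      have : ∀ k, ∑ p ∈ (Finset.HasAntidiagonal.antidiagonal N).filter (fun p => p.1 ≠ 0),
          φ p.1 * ∑ L ∈ LS k p.2, (if nz L + 1 = g + 1 then (L.map φ).prod else 0)
          = ∑ p ∈ (Finset.HasAntidiagonal.antidiagonal N).filter (fun p => p.1 ≠ 0), φ p.1 * aa φ k p.2 g := by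
        intro k
        simp [aa]
      rw [this k, this g, aa_succ φ h0 g, aa_of_lt φ g N (g+1) (by omega), zero_add, this g]
      have : ∑ p ∈ (Finset.HasAntidiagonal.antidiagonal N).filter (fun p => p.1 ≠ 0), φ p.1 * aa φ k p.2 g
         = (k.choose g : ℝ) * ∑ p ∈ (Finset.HasAntidiagonal.antidiagonal N).filter (fun p => p.1 ≠ 0), φ p.1 * aa φ g p.2 g := by
        rw [Finset.mul_sum]
        refine Finset.sum_congr rfl fun p _ => ?_
        rw [ih p.2 g]; ring
      rw [this, Nat.choose_succ_succ]
      push_cast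
      ring

theorem w_zero : w 0 = 1 := by
  unfold w
  rw [Nat.card_eq_one_iff_unique]
  exact ⟨⟨fun a b => Subtype.ext (Subsingleton.elim _ _)⟩, ⟨1, by ext j; exact j.elim0⟩⟩

theorem w_one : w 1 = 0 := by
  unfold w
  rw [Nat.card_eq_zero]
  left
  refine ⟨fun ⟨σ, h⟩ => ?_⟩
  have : (0 : Fin 1) ∈ sharedSteps 1 σ 1 := by
    rw [mem_shared_iff]
    exact ⟨Subsingleton.elim _ _, fun i hi => absurd hi (by simp)⟩
  rw [h] at this
  simp at this

theorem aa_eq_sum (φ : ℕ → ℝ) (h1 : φ 1 = 0) (g N : ℕ) :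
    aa φ g N g = ∑ x ∈ (Finset.univ : Finset (Fin g → Fin (N + 1))).filter
            (fun x => (∑ i, ((x i : ℕ))) = N ∧ ∀ i, 2 ≤ ((x i : ℕ))), ∏ i, φ (x i) := by
  have e1 : aa φ g N g = ∑ L ∈ (LS g N).filter (fun L => ∀ x ∈ L, 2 ≤ x), (L.map φ).prod := by
    rw [aa, Finset.sum_filter]
    refine Finset.sum_congr rfl fun L hL => ?_
    rw [mem_LS] at hL
    have hnz : nz L = g ↔ ∀ x ∈ L, x ≠ 0 := by
      rw [← hL.1, nz, List.length_filter_eq_length_iff]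
      simp
    by_cases hc : ∀ x ∈ L, 2 ≤ x
    · rw [if_pos hc, if_pos (hnz.2 fun x hx => by have := hc x hx; omega)]
    · rw [if_neg hc]
      split_ifs with h
      · rw [hnz] at h
        push Not at hc
        obtain ⟨x, hx, hlt⟩ := hc
        have : x = 1 := by have := h x hx; omega
        subst this
        rw [List.prod_eq_zero_iff, List.mem_map]
        exact ⟨1, hx, h1⟩
      · rfl
  rw [e1]
  symm
  refine Finset.sum_bij (fun x _ => List.ofFn fun i => (x i : ℕ)) ?_ ?_ ?_ ?_
  · intro x hx
    simp only [Finset.mem_filter, Finset.mem_univ, true_and] at hx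
    simp only [Finset.mem_filter, mem_LS, List.length_ofFn, List.sum_ofFn, true_and, List.mem_ofFn]
    refine ⟨hx.1, ?_⟩
    rintro _ ⟨i, rfl⟩
    exact hx.2 i
  · intro x _ y _ h
    have := List.ofFn_injective h
    funext i
    exact Fin.ext (congrFun this i)
  · intro L hL
    simp only [Finset.mem_filter, mem_LS] at hL
    obtain ⟨⟨rfl, rfl⟩, h2⟩ := hL
    have hof : List.ofFn (fun i : Fin L.length => L.get i) = L := List.ofFn_get L
    refine ⟨fun i => ⟨L.get i, Nat.lt_succ_of_le (List.single_le_sum (by simp) _ (List.get_mem L i))⟩, ?_, ?_⟩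
    · simp only [Finset.mem_filter, Finset.mem_univ, true_and]
      refine ⟨?_, fun i => h2 _ (List.get_mem L i)⟩
      rw [← List.sum_ofFn, hof]
    · exact hof
  · intro x _
    rw [List.map_ofFn, List.prod_ofFn]
    rfl

theorem pairProb_val (n : ℕ) (σ σ' : Equiv.Perm (Fin n)) (N : ℕ)
    (hN : N + (sharedSteps n σ σ').card = 2 * n) :
    pairProb n σ σ' = 1 / N.factorial *
      (((GS n (sharedSteps n σ σ')).map fun x => (2 * x).choose x).prod : ℕ) := by
  obtain ⟨h1, h2, h3⟩ := GS_facts n (sharedSteps n σ σ')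
  have hm := GS_mem n (sharedSteps n σ σ')
  rw [pairProb_eq n σ σ' (fun k => k ∈ pos 0 (GS n (sharedSteps n σ σ'))) hm]
  cases hL : GS n (sharedSteps n σ σ') with
  | nil => rw [hL] at h2; simp at h2
  | cons x L =>
    rw [hL] at h2 h3
    rw [EE_vol L x n N _ 0 (by omega) (by omega) (fun k _ => Iff.rfl) le_rfl zero_le_one,
      ENNReal.toReal_ofReal (by rw [sub_zero]; positivity)]
    simp

theorem card_pairs (n : ℕ) (L : List ℕ) (hn : n + 1 = L.sum + L.length) (hL : L ≠ []) :
    ((Finset.univ : Finset (Equiv.Perm (Fin n) × Equiv.Perm (Fin n))).filter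
      (fun p => GS n (sharedSteps n p.1 p.2) = L)).card = n.factorial * (L.map w).prod := by
  have e1 : NN n (fun k => k ∈ pos 0 L) = (L.map w).prod := by
    obtain ⟨x, L, rfl⟩ := List.exists_cons_of_ne_nil hL
    exact NN_count L x n _ hn (fun k _ => Iff.rfl)
  have e2 : n.factorial = Nat.card (Equiv.Perm (Fin n)) := by
    rw [Nat.card_eq_fintype_card, Fintype.card_perm, Fintype.card_fin]
  rw [← e1, e2, NN, ← Nat.card_prod, ← Fintype.card_subtype, ← Nat.card_eq_fintype_card]
  refine Nat.card_congr ⟨fun p => (p.1.1, ⟨p.1.1⁻¹ * p.1.2, ?_⟩), fun q => ⟨(q.1, q.1 * q.2.1), ?_⟩, ?_, ?_⟩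
  · rw [← GS_iff n _ L hn hL, ← shared_inv_mul n p.1.1, mul_inv_cancel_left]
    exact p.2
  · simp only [shared_inv_mul]
    rw [GS_iff n _ L hn hL]
    exact q.2.2
  · rintro ⟨⟨a, b⟩, h⟩
    simp
  · rintro ⟨a, ⟨b, h⟩⟩
    simp

end RandomHypercube

open RandomHypercube in
/-- Explicit expression for the pair sum `c_{s,g}` in terms of compositions of `n - s`
into `g` parts each at least `2` and the edge-disjoint path counts `w`. -/
theorem c_eq_composition_sum (n s g : ℕ) (hn : 1 ≤ n) (hs : s ≤ n - 2)
    (hg1 : 1 ≤ g) (hg2 : g ≤ min (s + 1) ((n - s) / 2)) :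
    c n s g
      = ((s + 1).choose g : ℝ) * ((n.factorial : ℝ) / ((2 * n - s).factorial : ℝ))
        * ∑ x ∈ (Finset.univ : Finset (Fin g → Fin (n - s + 1))).filter
            (fun x => (∑ i, ((x i : ℕ))) = n - s ∧ ∀ i, 2 ≤ ((x i : ℕ))),
          ∏ i, (w ((x i : ℕ)) : ℝ) * (((2 * ((x i : ℕ))).choose ((x i : ℕ)) : ℕ) : ℝ) := by
  have hsn : s ≤ n := by omega
  let φ : ℕ → ℝ := fun x => (w x : ℝ) * ((2 * x).choose x : ℕ)
  have hφ0 : φ 0 = 1 := by simp [φ, w_zero]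
  have hφ1 : φ 1 = 0 := by simp [φ, w_one]
  have key : c n s g = (n.factorial / (2 * n - s).factorial : ℝ) * aa φ (s + 1) (n - s) g := by
    unfold c aa
    rw [← Finset.sum_fiberwise_of_maps_to (t := LS (s + 1) (n - s))
      (g := fun p => GS n (sharedSteps n p.1 p.2))]
    · rw [Finset.mul_sum]
      refine Finset.sum_congr rfl fun L hL => ?_
      rw [mem_LS] at hL
      have hLn : n + 1 = L.sum + L.length := by omega
      have hL0 : L ≠ [] := by rintro rfl; simp at hL
      split_ifs with hg
      · have hset : (Finset.univ.filter
            (fun p : Equiv.Perm (Fin n) × Equiv.Perm (Fin n) =>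
              (sharedSteps n p.1 p.2).card = s ∧ numGaps n p.1 p.2 = g)).filter
              (fun p => GS n (sharedSteps n p.1 p.2) = L)
            = Finset.univ.filter (fun p => GS n (sharedSteps n p.1 p.2) = L) := by
          ext p
          simp only [Finset.mem_filter, Finset.mem_univ, true_and]
          refine ⟨fun h => h.2, fun h => ⟨⟨?_, ?_⟩, h⟩⟩
          · have := (GS_facts n (sharedSteps n p.1 p.2)).2.1
            rw [h] at this
            omega
          · rw [← hg, ← h]; rfl
        rw [hset]
        have : ∀ p ∈ Finset.univ.filter (fun p : Equiv.Perm (Fin n) × Equiv.Perm (Fin n) => GS n (sharedSteps n p.1 p.2) = L),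
            pairProb n p.1 p.2 = 1 / (2 * n - s).factorial * ((L.map fun x => (2 * x).choose x).prod : ℕ) := by
          intro p hp
          simp only [Finset.mem_filter, Finset.mem_univ, true_and] at hp
          have h := (GS_facts n (sharedSteps n p.1 p.2)).2.1
          rw [hp] at h
          rw [pairProb_val n p.1 p.2 (2 * n - s) (by omega), hp]
        rw [Finset.sum_congr rfl this, Finset.sum_const, card_pairs n L hLn hL0, nsmul_eq_mul]
        have hprod : (L.map φ).prod = ((L.map w).prod : ℕ) * ((L.map fun x => (2 * x).choose x).prod : ℕ) := by
          simp only [φ, List.prod_map_mul, Nat.cast_list_prod, List.map_map]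
          rfl
        rw [hprod]
        push_cast
        ring
      · rw [mul_zero]
        refine Finset.sum_eq_zero fun p hp => ?_
        exfalso
        simp only [Finset.mem_filter, Finset.mem_univ, true_and] at hp
        exact hg (by rw [← hp.2]; exact hp.1.2)
    · intro p hp
      simp only [Finset.mem_filter, Finset.mem_univ, true_and] at hp
      have h := (GS_facts n (sharedSteps n p.1 p.2)).2
      rw [mem_LS]
      omega
  rw [key, aa_choose φ hφ0, aa_eq_sum φ hφ1]
  ring
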